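/- Let n ≥ 1 and let T be a tree (a connected acyclic simple graph) on n+1 vertices, and let A be its n×(n+1) edge–vertex incidence matrix, i.e., rows are indexed by the n edges of T, columns by the n+1 vertices, and the entry in row e and column v is 1 if and only if v is an endpoint of e. Then the only nonempty 1-free set of columns of A is the full set of all n+1 columns; in particular, the stopping distance of A equals n+1. -/

import Mathlib

/-!
The row of an edge `ab` in the sum of the columns in `S` counts the endpoints of `ab` that lie
in `S`, so it equals `1` exactly when the edge crosses the boundary of `S`. Thus `S` is 1-free iff
no edge leaves it, and in a connected graph only `∅` and the whole vertex set have this property.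
-/

theorem sum_ite_mem_sym2Mk {V R : Type*} [DecidableEq V] [AddCommMonoidWithOne R] {a b : V}
    (hab : a ≠ b) (S : Finset V) :
    ∑ v ∈ S, (if v ∈ s(a, b) then (1 : R) else 0) =
      (if a ∈ S then 1 else 0) + if b ∈ S then 1 else 0 := by
  have indicator_edge (v : V) : (if v ∈ s(a, b) then (1 : R) else 0) =
      (if v = a then 1 else 0) + if v = b then 1 else 0 := by
    rcases eq_or_ne v a with rfl | hva
    · simp [hab]
    · simp [hva]
  simp only [indicator_edge, Finset.sum_add_distrib, Finset.sum_ite_eq']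

theorem sum_ite_mem_sym2Mk_ne_one_iff {V : Type*} [DecidableEq V] {a b : V} (hab : a ≠ b)
    (S : Finset V) :
    (∑ v ∈ S, if v ∈ s(a, b) then (1 : ℕ) else 0) ≠ 1 ↔ (a ∈ S ↔ b ∈ S) := by
  rw [sum_ite_mem_sym2Mk hab]
  by_cases ha : a ∈ S <;> by_cases hb : b ∈ S <;> simp [ha, hb]

theorem eq_univ_of_preconnected_of_forall_adj {V : Type*} {G : SimpleGraph V}
    (hG : G.Preconnected) {s : Set V} (hs : s.Nonempty)
    (hadj : ∀ ⦃a b⦄, G.Adj a b → a ∈ s → b ∈ s) : s = Set.univ := by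
  obtain ⟨a, ha⟩ := hs
  refine Set.eq_univ_of_forall fun b => by_contra fun hb => ?_
  obtain ⟨walk⟩ := hG a b
  obtain ⟨d, -, hfst, hsnd⟩ := walk.exists_boundary_dart s ha hb
  exact hsnd (hadj d.adj hfst)

theorem stmt_14_general {V : Type*} [DecidableEq V] {G : SimpleGraph V} (hG : G.Preconnected)
    {S : Finset V} (hS : S.Nonempty) :
    (∀ e ∈ G.edgeSet, (∑ v ∈ S, if v ∈ e then (1 : ℕ) else 0) ≠ 1) ↔
      (S : Set V) = Set.univ := by
  constructor
  · intro hfree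
    exact eq_univ_of_preconnected_of_forall_adj hG hS fun a b hab =>
      ((sum_ite_mem_sym2Mk_ne_one_iff hab.ne S).1 (hfree s(a, b) hab)).1
  · rintro hS_univ ⟨a, b⟩ hab
    have mem_S (v : V) : v ∈ S := Set.eq_univ_iff_forall.1 hS_univ v
    exact (sum_ite_mem_sym2Mk_ne_one_iff (G.ne_of_adj hab) S).2 (iff_of_true (mem_S a) (mem_S b))

/-- Let `n ≥ 1` and let `T` be a tree on `n+1` vertices, with edge–vertex incidence matrix
`A` (rows indexed by the edges of `T`, columns by the vertices, entry `1` iff the vertex is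
an endpoint of the edge).  Then the only nonempty 1-free set of columns of `A` is the full
set of all `n+1` columns; in particular the stopping distance of `A` is `n+1`. -/
theorem stmt_14 (n : ℕ) (hn : 1 ≤ n) (T : SimpleGraph (Fin (n + 1)))
    [DecidableRel T.Adj] (hT : T.IsTree)
    (S : Finset (Fin (n + 1))) (hS : S.Nonempty)
    (hfree : ∀ e ∈ T.edgeFinset, (∑ v ∈ S, if v ∈ e then (1 : ℕ) else 0) ≠ 1) :
    S = Finset.univ := by
  simp only [SimpleGraph.mem_edgeFinset] at hfree
  exact Finset.coe_eq_univ.1 ((stmt_14_general hT.connected.preconnected hS).1 hfree)
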